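/- Let m ≥ 2 and let F be an averaging operator. Define u : 𝕋_m × [0,∞) → ℝ by u(x,t) := Σ_{j=0}^{l(x)} (−1)^j · (l(x)!/(l(x)−j)!) · (1+t)^{−(j+1)}. Then for every x ∈ 𝕋_m and t ∈ (0,∞), the derivative ∂_t u(x,t) exists and equals F(u((x,0),t),…,u((x,m−1),t)) − u(x,t), and u(x,0) = (−1)^{l(x)} · D_{l(x)}, where D_n denotes the number of derangements of an n-element set. -/

import Mathlib

/-!
The function `u` depends on the vertex only through its level; write `gₙ` for `u` at level `n`. The
averaging operator returns the common value of `u` at the successors of a vertex, so the equation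
becomes `gₙ' = gₙ₊₁ - gₙ`. With `s = (1 + t)⁻¹` one has `gₙ₊₁ = s - (n + 1) s gₙ`. Since `s' = -s²`,
this recurrence propagates the differential equation from `g₀ = s`, and at `s = 1` it is the
recurrence `Dₙ₊₁ = (n + 1) Dₙ - (-1)ⁿ` of the derangement numbers up to the sign `(-1)ⁿ`.
-/

open MeasureTheory Real

/-- `F : ℝ^m → ℝ` is an averaging operator: continuous, `F(0,…,0)=0`, `F(1,…,1)=1`,
positively homogeneous, translation equivariant, strictly below the max when the
coordinates are not all equal, and nondecreasing in each variable. -/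
def IsAveraging (m : ℕ) (F : (Fin m → ℝ) → ℝ) : Prop :=
  Continuous F ∧
  F (fun _ => 0) = 0 ∧
  F (fun _ => 1) = 1 ∧
  (∀ (t : ℝ) (x : Fin m → ℝ), F (fun j => t * x j) = t * F x) ∧
  (∀ (t : ℝ) (x : Fin m → ℝ), F (fun j => t + x j) = t + F x) ∧
  (∀ x : Fin m → ℝ, (∃ i j, x i ≠ x j) → F x < ⨆ j, x j) ∧
  (∀ x y : Fin m → ℝ, (∀ j, x j ≤ y j) → F x ≤ F y)

/-- The operator `K_f u(x,t) = ∫₀ᵗ e^{z−t} F(u((x,0),z),…,u((x,m−1),z)) dz + e^{−t} f(x)`,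
where vertices of the directed tree `𝕋_m` are modeled as lists over `Fin m`
and `(x,i)` is the successor `x ++ [i]`. -/
noncomputable def Kop (m : ℕ) (F : (Fin m → ℝ) → ℝ) (f : List (Fin m) → ℝ)
    (u : List (Fin m) → ℝ → ℝ) (x : List (Fin m)) (t : ℝ) : ℝ :=
  (∫ z in (0:ℝ)..t, Real.exp (z - t) * F (fun i => u (x ++ [i]) z)) +
    Real.exp (-t) * f x

theorem IsAveraging.apply_const {m : ℕ} {F : (Fin m → ℝ) → ℝ} (hF : IsAveraging m F) (c : ℝ) :
    F (fun _ => c) = c := by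
  obtain ⟨-, map_zero, -, -, map_const_add, -, -⟩ := hF
  simpa [map_zero] using map_const_add c fun _ => 0

/-- The function `gₙ(t) = ∑_{j ≤ n} (-1)ʲ n(n-1)⋯(n-j+1) (1 + t)^{-(j+1)}`, the common value of the
solution at all vertices of level `n`. The coefficients are written as falling factorials rather
than as the quotients `n! / (n - j)!`, so that they make sense in every characteristic. -/
def derangementSum {𝕜 : Type*} [Field 𝕜] (n : ℕ) (t : 𝕜) : 𝕜 :=
  ∑ j ∈ Finset.range (n + 1), (-1) ^ j * (n.descFactorial j : 𝕜) * ((1 + t) ^ (j + 1))⁻¹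

section Field

variable {𝕜 : Type*} [Field 𝕜]

theorem derangementSum_eq_sum_factorial_div [CharZero 𝕜] (n : ℕ) (t : 𝕜) :
    derangementSum n t = ∑ j ∈ Finset.range (n + 1),
      (-1) ^ j * ((n.factorial : 𝕜) / ((n - j).factorial : 𝕜)) * ((1 + t) ^ (j + 1))⁻¹ := by
  refine Finset.sum_congr rfl fun j hj => ?_
  have hjn : j ≤ n := Finset.mem_range_succ_iff.mp hj
  have hfactorial : ((n - j).factorial : 𝕜) ≠ 0 := mod_cast (n - j).factorial_ne_zero
  rw [← Nat.factorial_mul_descFactorial hjn, Nat.cast_mul, mul_div_cancel_left₀ _ hfactorial]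

theorem derangementSum_zero (t : 𝕜) : derangementSum 0 t = (1 + t)⁻¹ := by
  simp [derangementSum]

theorem derangementSum_succ (n : ℕ) (t : 𝕜) :
    derangementSum (n + 1) t = (1 + t)⁻¹ - (n + 1) * (1 + t)⁻¹ * derangementSum n t := by
  rw [derangementSum, Finset.sum_range_succ', derangementSum, Finset.mul_sum, sub_eq_neg_add,
    ← Finset.sum_neg_distrib]
  congr 1
  · refine Finset.sum_congr rfl fun j _ => ?_
    rw [Nat.succ_descFactorial_succ, pow_succ (1 + t) (j + 1), mul_inv]
    push_cast
    ring
  · simp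

theorem derangementSum_apply_zero (n : ℕ) :
    derangementSum n (0 : 𝕜) = (-1) ^ n * (numDerangements n : 𝕜) := by
  induction n with
  | zero => simp [derangementSum_zero]
  | succ n ih =>
    have hrec : (numDerangements (n + 1) : 𝕜) = (n + 1) * numDerangements n - (-1) ^ n := by
      exact_mod_cast congrArg (Int.cast : ℤ → 𝕜) (numDerangements_succ n)
    have hsign : (-1 : 𝕜) ^ n * (-1) ^ n = 1 := by rw [← mul_pow, neg_one_mul, neg_neg, one_pow]
    rw [derangementSum_succ, ih, hrec, pow_succ, add_zero, inv_one]
    linear_combination -hsign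

end Field

section NormedField

variable {𝕜 : Type*} [NontriviallyNormedField 𝕜]

theorem hasDerivAt_derangementSum (n : ℕ) {t : 𝕜} (ht : 1 + t ≠ 0) :
    HasDerivAt (derangementSum n) (derangementSum (n + 1) t - derangementSum n t) t := by
  have hinv : HasDerivAt (fun t : 𝕜 => (1 + t)⁻¹) (-((1 + t)⁻¹ ^ 2)) t := by
    simpa only [inv_pow] using (hasDerivAt_inv ht).comp_const_add 1 t
  induction n with
  | zero =>
    rw [funext derangementSum_zero]
    refine hinv.congr_deriv ?_
    rw [derangementSum_succ, derangementSum_zero]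
    push_cast
    ring
  | succ n ih =>
    rw [funext (derangementSum_succ n)]
    refine (hinv.sub ((hinv.const_mul (n + 1 : 𝕜)).mul ih)).congr_deriv ?_
    rw [derangementSum_succ (n + 1), derangementSum_succ n]
    push_cast
    ring

theorem statement15_general {ι : Type*} {F : (ι → 𝕜) → 𝕜} (hF : ∀ c, F (fun _ => c) = c)
    {u : List ι → 𝕜 → 𝕜} (hu : ∀ x t, u x t = derangementSum x.length t) :
    (∀ x t, 1 + t ≠ 0 → HasDerivAt (u x) (F (fun i => u (x ++ [i]) t) - u x t) t) ∧
      ∀ x, u x 0 = (-1) ^ x.length * (numDerangements x.length : 𝕜) := by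
  obtain rfl : u = fun x => derangementSum x.length := funext₂ hu
  refine ⟨fun x t ht => ?_, fun x => derangementSum_apply_zero x.length⟩
  simp only [List.length_append, List.length_singleton, hF]
  exact hasDerivAt_derangementSum x.length ht

end NormedField

/-- `u(x,t) = Σ_{j=0}^{l(x)} (−1)^j (l(x)!/(l(x)−j)!) (1+t)^{−(j+1)}`
solves the equation for `t > 0` and has initial value `(−1)^{l(x)} D_{l(x)}`,
where `D_n = numDerangements n` is the number of derangements of an `n`-element set. -/
theorem statement15 (m : ℕ) (hm : 2 ≤ m) (F : (Fin m → ℝ) → ℝ) (hF : IsAveraging m F)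
    (u : List (Fin m) → ℝ → ℝ)
    (hu : ∀ (x : List (Fin m)) (t : ℝ),
      u x t = ∑ j ∈ Finset.range (x.length + 1),
        (-1 : ℝ) ^ j * ((x.length.factorial : ℝ) / ((x.length - j).factorial : ℝ)) *
          ((1 + t) ^ (j + 1))⁻¹) :
    (∀ (x : List (Fin m)), ∀ t > (0:ℝ),
      HasDerivAt (u x) (F (fun i => u (x ++ [i]) t) - u x t) t) ∧
    (∀ x : List (Fin m),
      u x 0 = (-1 : ℝ) ^ x.length * (numDerangements x.length : ℝ)) := by
  obtain ⟨hderiv, hinit⟩ := statement15_general hF.apply_const fun x t =>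
    (hu x t).trans (derangementSum_eq_sum_factorial_div x.length t).symm
  exact ⟨fun x t ht => hderiv x t (by positivity), hinit⟩
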